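/- Suppose (φ, θ, u, p̃) are smooth spatially periodic fields on (0,T) × ℝ^d with θ > 0 everywhere that solve the NACNS system (AC), (IE), (NS), (DF), and set p := p̃ + F with F := θG(∇φ) + f(φ,θ). Then for every smooth periodic vector field v and every t ∈ (0,T): ∫_Ω ∂_tu·v dx + c_skw(u,u,v) = −∫_Ω η Du:Dv dx + ∫_Ω p div(v) dx + ∫_Ω b·v dx − ∫_Ω ((∇G(∇φ)·∇θ)∇φ + s∇θ − μ∇φ)·v dx (the weak form of the momentum equation with the pressure shifted by the free energy). -/

import Mathlib

open MeasureTheory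

noncomputable section

/-- `i`-th spatial partial derivative of a scalar field. -/
def pd {d : ℕ} (i : Fin d) (g : (Fin d → ℝ) → ℝ) (x : Fin d → ℝ) : ℝ :=
  fderiv ℝ g x (Pi.single i 1)

/-- Spatial gradient of a scalar field. -/
def grad {d : ℕ} (g : (Fin d → ℝ) → ℝ) (x : Fin d → ℝ) : Fin d → ℝ :=
  fun i => pd i g x

/-- Divergence of a vector field. -/
def divg {d : ℕ} (u : (Fin d → ℝ) → Fin d → ℝ) (x : Fin d → ℝ) : ℝ :=
  ∑ i, pd i (fun y => u y i) x

/-- Euclidean dot product. -/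
def dot {d : ℕ} (a b : Fin d → ℝ) : ℝ := ∑ i, a i * b i

/-- Time derivative of a time-dependent scalar field. -/
def dt {d : ℕ} (g : ℝ → (Fin d → ℝ) → ℝ) (t : ℝ) (x : Fin d → ℝ) : ℝ :=
  deriv (fun s => g s x) t

/-- The box `Ω = [0, L₁] × ⋯ × [0, L_d]`. -/
def box {d : ℕ} (L : Fin d → ℝ) : Set (Fin d → ℝ) :=
  Set.univ.pi fun i => Set.Icc 0 (L i)

/-- Spatial periodicity with periods `L`. -/
def SpacePeriodic {d : ℕ} (L : Fin d → ℝ) (g : (Fin d → ℝ) → ℝ) : Prop :=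
  ∀ x i, g (x + Pi.single i (L i)) = g x

/-- Entropy density `s = -G(∇φ) - ∂_θ f(φ, θ)`. -/
def entS {d : ℕ} (G : (Fin d → ℝ) → ℝ) (f : ℝ → ℝ → ℝ)
    (φ θ : ℝ → (Fin d → ℝ) → ℝ) (t : ℝ) (x : Fin d → ℝ) : ℝ :=
  -G (grad (φ t) x) - deriv (f (φ t x)) (θ t x)

/-- Internal energy density `e = f(φ, θ) - θ ∂_θ f(φ, θ)`. -/
def intE {d : ℕ} (f : ℝ → ℝ → ℝ) (φ θ : ℝ → (Fin d → ℝ) → ℝ)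
    (t : ℝ) (x : Fin d → ℝ) : ℝ :=
  f (φ t x) (θ t x) - θ t x * deriv (f (φ t x)) (θ t x)

/-- Total energy density `e_tot = e + |u|²/2`. -/
def totE {d : ℕ} (f : ℝ → ℝ → ℝ) (φ θ : ℝ → (Fin d → ℝ) → ℝ)
    (u : ℝ → (Fin d → ℝ) → Fin d → ℝ) (t : ℝ) (x : Fin d → ℝ) : ℝ :=
  intE f φ θ t x + (1 / 2) * ∑ i, (u t x i) ^ 2

/-- Chemical potential `μ = -θ div(∇G(∇φ)) + ∂_φ f(φ, θ)`. -/
def chemMu {d : ℕ} (G : (Fin d → ℝ) → ℝ) (f : ℝ → ℝ → ℝ)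
    (φ θ : ℝ → (Fin d → ℝ) → ℝ) (t : ℝ) (x : Fin d → ℝ) : ℝ :=
  -θ t x * divg (fun y => grad G (grad (φ t) y)) x
    + deriv (fun a => f a (θ t x)) (φ t x)

/-- Korteweg stress `σ̃ᵢⱼ = θ (∇G(∇φ))ᵢ ∂ⱼφ`. -/
def korteweg {d : ℕ} (G : (Fin d → ℝ) → ℝ)
    (φ θ : ℝ → (Fin d → ℝ) → ℝ) (t : ℝ) (x : Fin d → ℝ) (i j : Fin d) : ℝ :=
  θ t x * grad G (grad (φ t) x) i * pd j (φ t) x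

/-- Symmetric gradient `Dw = (∇w + (∇w)ᵀ)/2` of a (spatial) vector field. -/
def symGrad {d : ℕ} (w : (Fin d → ℝ) → Fin d → ℝ) (x : Fin d → ℝ) (i j : Fin d) : ℝ :=
  (pd i (fun y => w y j) x + pd j (fun y => w y i) x) / 2

/-!
The argument is purely spatial, at a fixed time `t`. Two facts carry it.

* `divg_korteweg`: with `F = θG(∇φ) + f(φ, θ)`, the product and chain rules and equality of mixed
  partials give, pointwise, `div σ̃ = (∇G(∇φ)·∇θ)∇φ + s∇θ - μ∇φ + ∇F`. Hence `∇p̃ + div σ̃` equals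
  `∇(p̃ + F)` plus the force tested against `v` in the claim.
* `integral_divg_eq_zero`: divergences of periodic `C¹` fields integrate to zero over the period
  cell.

Testing the momentum equation with `v`, the difference of the two sides of the weak form is, before
integration, the divergence of `ηDu v - (p̃ + F)v - ½(u·v)u`. The first term uses the symmetry of
`Du`, so that `Du:∇v = Du:Dv`; the last uses `div u = 0`, and produces the skew-symmetrized
convection form.
-/

theorem contDiff_pd {d : ℕ} {n : WithTop ℕ∞} {g : (Fin d → ℝ) → ℝ} (i : Fin d)
    (hg : ContDiff ℝ (n + 1) g) : ContDiff ℝ n (pd i g) :=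
  (hg.fderiv_right le_rfl).clm_apply contDiff_const

theorem contDiff_grad {d : ℕ} {n : WithTop ℕ∞} {g : (Fin d → ℝ) → ℝ}
    (hg : ContDiff ℝ (n + 1) g) : ContDiff ℝ n (grad g) :=
  contDiff_pi.2 fun i => contDiff_pd i hg

theorem continuous_pd {d : ℕ} {g : (Fin d → ℝ) → ℝ} (i : Fin d)
    (hg : ContDiff ℝ 1 g) : Continuous (pd i g) :=
  (contDiff_pd (n := 0) i (by simpa using hg)).continuous

theorem pd_mul {d : ℕ} {a b : (Fin d → ℝ) → ℝ} (ha : ContDiff ℝ 1 a) (hb : ContDiff ℝ 1 b)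
    (i : Fin d) (x : Fin d → ℝ) :
    pd i (fun y => a y * b y) x = pd i a x * b x + a x * pd i b x := by
  unfold pd
  rw [fderiv_fun_mul (ha.differentiable one_ne_zero x) (hb.differentiable one_ne_zero x)]
  simp only [add_apply, smul_apply, smul_eq_mul]
  ring

theorem pd_add {d : ℕ} {a b : (Fin d → ℝ) → ℝ} (ha : ContDiff ℝ 1 a) (hb : ContDiff ℝ 1 b)
    (i : Fin d) (x : Fin d → ℝ) :
    pd i (fun y => a y + b y) x = pd i a x + pd i b x := by
  unfold pd
  rw [fderiv_fun_add (ha.differentiable one_ne_zero x) (hb.differentiable one_ne_zero x)]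
  rfl

theorem pd_sum {d : ℕ} {ι : Type*} {s : Finset ι} {a : ι → (Fin d → ℝ) → ℝ}
    (ha : ∀ j, ContDiff ℝ 1 (a j)) (i : Fin d) (x : Fin d → ℝ) :
    pd i (fun y => ∑ j ∈ s, a j y) x = ∑ j ∈ s, pd i (a j) x := by
  unfold pd
  rw [fderiv_fun_sum fun j _ => (ha j).differentiable one_ne_zero x]
  simp

/-- Equality of mixed partials. -/
theorem pd_comm {d : ℕ} {g : (Fin d → ℝ) → ℝ} (hg : ContDiff ℝ 2 g)
    (i j : Fin d) (x : Fin d → ℝ) : pd i (pd j g) x = pd j (pd i g) x := by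
  have hd : DifferentiableAt ℝ (fderiv ℝ g) x :=
    (hg.fderiv_right (m := 1) (by norm_num)).differentiable one_ne_zero x
  have key : ∀ k l : Fin d, pd k (pd l g) x
      = fderiv ℝ (fderiv ℝ g) x (Pi.single k 1) (Pi.single l 1) := by
    intro k l
    unfold pd
    rw [fderiv_clm_apply hd (differentiableAt_const _)]
    simp
  rw [key, key]
  exact (hg.contDiffAt.isSymmSndFDerivAt (by simp)) _ _

theorem pd_comp_vec {d : ℕ} {G : (Fin d → ℝ) → ℝ} (hG : ContDiff ℝ 1 G)
    {w : (Fin d → ℝ) → Fin d → ℝ} (hw : ContDiff ℝ 1 w) (j : Fin d) (x : Fin d → ℝ) :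
    pd j (fun y => G (w y)) x = ∑ i, grad G (w x) i * pd j (fun y => w y i) x := by
  have hwd := hw.differentiable one_ne_zero x
  have hc : fderiv ℝ (fun y => G (w y)) x = (fderiv ℝ G (w x)).comp (fderiv ℝ w x) :=
    fderiv_comp x (hG.differentiable one_ne_zero _) hwd
  have hcoord : ∀ i, fderiv ℝ (fun y => w y i) x (Pi.single j 1)
      = fderiv ℝ w x (Pi.single j 1) i := by
    intro i
    rw [fderiv_apply hwd i]
    rfl
  simp only [pd, grad, hcoord, hc, ContinuousLinearMap.comp_apply]
  generalize fderiv ℝ w x (Pi.single j 1) = z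
  have := (fderiv ℝ G (w x)).toLinearMap.pi_apply_eq_sum_univ z
  simp only [ContinuousLinearMap.coe_coe, smul_eq_mul] at this
  rw [this]
  refine Finset.sum_congr rfl fun i _ => ?_
  rw [mul_comm]
  congr 2
  ext k
  simp [Pi.single_apply, eq_comm]

/-- Chain rule for `y ↦ f (φ y) (θ y)`, with the gradient of `f` written through its one-variable
derivatives. Positivity of `θ` keeps `(φ, θ)` in the open half-plane where `f` is `C²`. -/
theorem pd_comp_two {d : ℕ} {f : ℝ → ℝ → ℝ}
    (hf : ContDiffOn ℝ 2 (fun q : ℝ × ℝ => f q.1 q.2) (Set.univ ×ˢ Set.Ioi 0))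
    {φ θ : (Fin d → ℝ) → ℝ} (hφ : ContDiff ℝ 1 φ) (hθ : ContDiff ℝ 1 θ)
    (hpos : ∀ x, 0 < θ x) (j : Fin d) (x : Fin d → ℝ) :
    pd j (fun y => f (φ y) (θ y)) x
      = deriv (fun a => f a (θ x)) (φ x) * pd j φ x + deriv (f (φ x)) (θ x) * pd j θ x := by
  have hF : DifferentiableAt ℝ (fun q : ℝ × ℝ => f q.1 q.2) (φ x, θ x) :=
    (hf.contDiffAt ((isOpen_univ.prod isOpen_Ioi).mem_nhds
      (show (φ x, θ x) ∈ Set.univ ×ˢ Set.Ioi (0 : ℝ) from ⟨trivial, hpos x⟩))).differentiableAt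
      two_ne_zero
  have h := hF.hasFDerivAt
  have hφd := (hφ.differentiable one_ne_zero x).hasFDerivAt
  have hθd := (hθ.differentiable one_ne_zero x).hasFDerivAt
  have hc : HasFDerivAt (fun y => f (φ y) (θ y)) _ x :=
    HasFDerivAt.comp (g := fun q : ℝ × ℝ => f q.1 q.2) x h (hφd.prodMk hθd)
  have h1 : HasDerivAt (fun a => f a (θ x)) _ (φ x) :=
    HasFDerivAt.comp_hasDerivAt (l := fun q : ℝ × ℝ => f q.1 q.2) (φ x) h
      ((hasDerivAt_id (φ x)).prodMk (hasDerivAt_const (φ x) (θ x)))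
  have h2 : HasDerivAt (f (φ x)) _ (θ x) :=
    HasFDerivAt.comp_hasDerivAt (l := fun q : ℝ × ℝ => f q.1 q.2) (θ x) h
      ((hasDerivAt_const (θ x) (φ x)).prodMk (hasDerivAt_id (θ x)))
  rw [h1.deriv, h2.deriv]
  unfold pd
  rw [hc.fderiv]
  simp only [ContinuousLinearMap.comp_apply, ContinuousLinearMap.prod_apply]
  generalize fderiv ℝ φ x (Pi.single j 1) = a
  generalize fderiv ℝ θ x (Pi.single j 1) = b
  have : ((a, b) : ℝ × ℝ) = a • ((1 : ℝ), (0 : ℝ)) + b • ((0 : ℝ), (1 : ℝ)) := by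
    ext <;> simp
  rw [this, map_add, map_smul, map_smul]
  simp [mul_comm]

theorem pd_periodic {d : ℕ} {L : Fin d → ℝ} {g : (Fin d → ℝ) → ℝ} (hg : SpacePeriodic L g)
    (i : Fin d) : SpacePeriodic L (pd i g) := by
  intro x k
  unfold pd
  rw [← fderiv_comp_add_right (f := g) (Pi.single k (L k))]
  congr 2
  funext y
  exact hg y k

/-- The integral of the divergence of a `C¹` periodic field over a period cell vanishes: opposite
faces of the box cancel in the divergence theorem. -/
theorem integral_divg_eq_zero {d : ℕ} {L : Fin d → ℝ} (hL : ∀ i, 0 < L i)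
    {H : Fin d → (Fin d → ℝ) → ℝ} (hH : ∀ i, ContDiff ℝ 1 (H i))
    (hper : ∀ i, SpacePeriodic L (H i)) : ∫ x in box L, ∑ i, pd i (H i) x = 0 := by
  cases d with
  | zero => simp
  | succ n =>
    have hbox : box L = Set.Icc 0 L := Set.pi_univ_Icc 0 L
    rw [hbox]
    have hle : (0 : Fin (n + 1) → ℝ) ≤ L := fun i => (hL i).le
    have hcont : Continuous fun x => ∑ i, pd i (H i) x :=
      continuous_finsetSum _ fun i _ => continuous_pd i (hH i)
    have := integral_divergence_of_hasFDerivAt_off_countable' (0 : Fin (n + 1) → ℝ) L hle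
      H (fun i x => fderiv ℝ (H i) x) ∅ Set.countable_empty
      (fun i => (hH i).continuous.continuousOn)
      (fun x _ i => ((hH i).differentiable one_ne_zero x).hasFDerivAt)
      hcont.integrableOn_Icc
    refine this.trans (Finset.sum_eq_zero fun i _ => sub_eq_zero.2 ?_)
    congr 1
    funext x
    have hx : i.insertNth (L i) x
        = (i.insertNth ((0 : Fin (n + 1) → ℝ) i) x : Fin (n + 1) → ℝ) + Pi.single i (L i) := by
      ext k
      rcases Fin.eq_self_or_eq_succAbove i k with rfl | ⟨k, rfl⟩ <;> simp
    rw [hx, hper i _ i]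

/-- Pointwise identity `div σ̃ = (∇G(∇φ)·∇θ)∇φ + s∇θ - μ∇φ + ∇F` with `F = θG(∇φ) + f(φ, θ)`.
Equality of mixed partials turns the term `θ ∑ᵢ gᵢ ∂ᵢ∂ⱼφ` of `div σ̃`, where `g = ∇G(∇φ)`, into the
term `θ ∂ⱼ(G(∇φ))` of `∇F`. -/
theorem divg_korteweg {d : ℕ} {G : (Fin d → ℝ) → ℝ} (hG : ContDiff ℝ 2 G) {f : ℝ → ℝ → ℝ}
    (hf : ContDiffOn ℝ 2 (fun q : ℝ × ℝ => f q.1 q.2) (Set.univ ×ˢ Set.Ioi 0))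
    {φ θ : ℝ → (Fin d → ℝ) → ℝ} {t : ℝ} (hφ : ContDiff ℝ 2 (φ t)) (hθ : ContDiff ℝ 1 (θ t))
    (hpos : ∀ x, 0 < θ t x) (x : Fin d → ℝ) (j : Fin d) :
    ∑ i, pd i (fun y => korteweg G φ θ t y i j) x
      = (dot (grad G (grad (φ t) x)) (grad (θ t) x) * pd j (φ t) x
          + entS G f φ θ t x * pd j (θ t) x - chemMu G f φ θ t x * pd j (φ t) x)
        + pd j (fun y => θ t y * G (grad (φ t) y) + f (φ t y) (θ t y)) x := by
  have hgφ : ContDiff ℝ 1 (grad (φ t)) := contDiff_grad (n := 1) (by norm_num; exact hφ)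
  have hφ1 : ContDiff ℝ 1 (φ t) := hφ.of_le (by norm_num)
  have hG1 : ContDiff ℝ 1 G := hG.of_le (by norm_num)
  have hgG : ContDiff ℝ 1 (grad G) := contDiff_grad (n := 1) (by norm_num; exact hG)
  have hg : ∀ i, ContDiff ℝ 1 fun y => grad G (grad (φ t) y) i := fun i =>
    contDiff_pi.1 (hgG.comp hgφ) i
  have hpdφ : ContDiff ℝ 1 (pd j (φ t)) := contDiff_pi.1 hgφ j
  have hGφ : ContDiff ℝ 1 fun y => G (grad (φ t) y) := hG1.comp hgφ
  have hfc : ContDiff ℝ 1 fun y => f (φ t y) (θ t y) :=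
    (hf.of_le (by norm_num)).comp_contDiff (hφ1.prodMk hθ) fun y => ⟨trivial, hpos y⟩
  rw [pd_add (hθ.mul hGφ) hfc, pd_mul hθ hGφ, pd_comp_vec hG1 hgφ,
    pd_comp_two hf hφ1 hθ hpos]
  have hterm : ∀ i, pd i (fun y => korteweg G φ θ t y i j) x
      = grad G (grad (φ t) x) i * pd i (θ t) x * pd j (φ t) x
        + θ t x * pd i (fun y => grad G (grad (φ t) y) i) x * pd j (φ t) x
        + θ t x * (grad G (grad (φ t) x) i * pd j (fun y => grad (φ t) y i) x) := by
    intro i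
    have e : pd j (fun y => grad (φ t) y i) x = pd i (pd j (φ t)) x := pd_comm hφ j i x
    unfold korteweg
    rw [pd_mul (hθ.mul (hg i)) hpdφ, pd_mul hθ (hg i), e]
    ring
  simp only [hterm, Finset.sum_add_distrib, ← Finset.mul_sum, ← Finset.sum_mul]
  simp only [entS, chemMu, dot, divg, grad]
  ring

/-- Integrated form of a pointwise balance in which the terms `zᵢ` integrate to zero; the pattern of
signs and factors is that of the weak momentum equation. -/
theorem integral_balance {α : Type*} [MeasurableSpace α] {m : Measure α}
    {a₁ a₂ a₃ a₄ a₅ a₆ a₇ z₁ z₂ z₃ : α → ℝ}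
    (i₁ : Integrable a₁ m) (i₂ : Integrable a₂ m) (i₃ : Integrable a₃ m)
    (i₄ : Integrable a₄ m) (i₅ : Integrable a₅ m) (i₆ : Integrable a₆ m)
    (i₇ : Integrable a₇ m) (j₁ : Integrable z₁ m) (j₂ : Integrable z₂ m)
    (j₃ : Integrable z₃ m)
    (hpt : ∀ x, a₁ x + ((1 / 2) * a₂ x - (1 / 2) * a₃ x)
      = -a₄ x + a₅ x + a₆ x - a₇ x + (z₁ x - z₂ x - (1 / 2) * z₃ x))
    (h₁ : ∫ x, z₁ x ∂m = 0) (h₂ : ∫ x, z₂ x ∂m = 0) (h₃ : ∫ x, z₃ x ∂m = 0) :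
    (∫ x, a₁ x ∂m) + ((1 / 2) * (∫ x, a₂ x ∂m) - (1 / 2) * ∫ x, a₃ x ∂m)
      = -(∫ x, a₄ x ∂m) + (∫ x, a₅ x ∂m) + (∫ x, a₆ x ∂m) - ∫ x, a₇ x ∂m := by
  have e : a₁ + ((1 / 2 : ℝ) • a₂ - (1 / 2 : ℝ) • a₃)
      = -a₄ + a₅ + a₆ - a₇ + (z₁ - z₂ - (1 / 2 : ℝ) • z₃) := funext hpt
  have k₂ := i₂.smul (1 / 2 : ℝ)
  have k₃ := i₃.smul (1 / 2 : ℝ)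
  have l₃ := j₃.smul (1 / 2 : ℝ)
  have hsmul : ∀ g : α → ℝ, ∫ x, ((1 / 2 : ℝ) • g) x ∂m = (1 / 2) * ∫ x, g x ∂m :=
    fun g => integral_const_mul _ _
  have h := congrArg (fun g => ∫ x, g x ∂m) e
  rwa [integral_add' i₁ (k₂.sub k₃), integral_sub' k₂ k₃, hsmul, hsmul,
    integral_add' (((i₄.neg.add i₅).add i₆).sub i₇) ((j₁.sub j₂).sub l₃),
    integral_sub' ((i₄.neg.add i₅).add i₆) i₇, integral_add' (i₄.neg.add i₅) i₆,
    integral_add' i₄.neg i₅, integral_neg', integral_sub' (j₁.sub j₂) l₃,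
    integral_sub' j₁ j₂, hsmul, h₁, h₂, h₃, mul_zero, sub_zero, sub_zero, add_zero] at h

/-- Weak form, at a fixed time, of
`w + (u·∇)u = div(h Du) - ∇P - (k + ∇F) + b` with `div u = 0`. Here `w` plays the role of `∂ₜu`; its
continuity need not be assumed, being forced by the equation. -/
theorem weak_form_of_strong_form {d : ℕ} {L : Fin d → ℝ} (hL : ∀ i, 0 < L i)
    {h P F : (Fin d → ℝ) → ℝ} {w u b k v : (Fin d → ℝ) → Fin d → ℝ}
    (hh : ContDiff ℝ 1 h) (hP : ContDiff ℝ 1 P) (hF : ContDiff ℝ 1 F)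
    (hu : ContDiff ℝ 2 u) (hv : ContDiff ℝ 1 v)
    (hb : Continuous b) (hk : Continuous k)
    (hhp : SpacePeriodic L h) (hPp : SpacePeriodic L P) (hFp : SpacePeriodic L F)
    (hup : ∀ j, SpacePeriodic L fun x => u x j) (hvp : ∀ j, SpacePeriodic L fun x => v x j)
    (hdiv : ∀ x, divg u x = 0)
    (heq : ∀ x j, w x j + ∑ i, u x i * pd i (fun y => u y j) x
      = (∑ i, pd i (fun y => h y * symGrad u y i j) x) - pd j P x - (k x j + pd j F x)
        + b x j) :
    (∫ x in box L, ∑ j, w x j * v x j)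
      + ((1 / 2) * (∫ x in box L, ∑ j, (∑ i, u x i * pd i (fun y => u y j) x) * v x j)
        - (1 / 2) * ∫ x in box L, ∑ j, (∑ i, u x i * pd i (fun y => v y j) x) * u x j)
      = -(∫ x in box L, h x * ∑ i, ∑ j, symGrad u x i j * symGrad v x i j)
        + (∫ x in box L, (P x + F x) * divg v x) + (∫ x in box L, dot (b x) (v x))
        - ∫ x in box L, ∑ j, k x j * v x j := by
  have hu' : ∀ j, ContDiff ℝ 2 fun x => u x j := contDiff_pi.1 hu
  have hu1 : ∀ j, ContDiff ℝ 1 fun x => u x j := fun j => (hu' j).of_le (by norm_num)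
  have hv' : ∀ j, ContDiff ℝ 1 fun x => v x j := contDiff_pi.1 hv
  have hb' : ∀ j, Continuous fun x => b x j := continuous_pi_iff.1 hb
  have hk' : ∀ j, Continuous fun x => k x j := continuous_pi_iff.1 hk
  have hpu : ∀ i j, ContDiff ℝ 1 (pd i fun x => u x j) := fun i j =>
    contDiff_pd (n := 1) i (by norm_num; exact hu' j)
  have hpu0 : ∀ i j, Continuous (pd i fun x => u x j) := fun i j => (hpu i j).continuous
  have hpv0 : ∀ i j, Continuous (pd i fun x => v x j) := fun i j => continuous_pd i (hv' j)
  have hu0 : ∀ j, Continuous fun x => u x j := fun j => (hu1 j).continuous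
  have hv0 : ∀ j, Continuous fun x => v x j := fun j => (hv' j).continuous
  have hS : ∀ i j, ContDiff ℝ 1 fun x => symGrad u x i j := fun i j =>
    ((hpu i j).add (hpu j i)).div_const 2
  have hS0 : ∀ i j, Continuous fun x => symGrad u x i j := fun i j => (hS i j).continuous
  have hSv0 : ∀ i j, Continuous fun x => symGrad v x i j := fun i j =>
    ((hpv0 i j).add (hpv0 j i)).div_const 2
  have hA : ∀ i j, ContDiff ℝ 1 fun x => h x * symGrad u x i j := fun i j => hh.mul (hS i j)
  have hSp : ∀ i j, SpacePeriodic L fun x => symGrad u x i j := fun i j x l => by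
    simp only [symGrad]
    rw [pd_periodic (hup j) i x l, pd_periodic (hup i) j x l]
  have hw0 : ∀ j, Continuous fun x => w x j := by
    intro j
    have : (fun x => w x j) = fun x => (∑ i, pd i (fun y => h y * symGrad u y i j) x)
        - pd j P x - (k x j + pd j F x) + b x j
        - ∑ i, u x i * pd i (fun y => u y j) x := by
      funext x
      rw [← heq x j]
      ring
    rw [this]
    have h1 : ∀ i, Continuous fun x => pd i (fun y => h y * symGrad u y i j) x := fun i =>
      continuous_pd i (hA i j)
    have h2 := continuous_pd j hP
    have h3 := continuous_pd j hF
    have h4 := hk' j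
    have h5 := hb' j
    have h6 := fun i => hpu0 i j
    fun_prop
  have int : ∀ {g : (Fin d → ℝ) → ℝ}, Continuous g → IntegrableOn g (box L) := fun hg =>
    hg.continuousOn.integrableOn_compact (isCompact_univ_pi fun _ => isCompact_Icc)
  have hh0 := hh.continuous
  have hP0 := hP.continuous
  have hF0 := hF.continuous
  have i1 := int (show Continuous fun x => ∑ j, w x j * v x j by fun_prop)
  have i2 := int (show Continuous fun x =>
    ∑ j, (∑ i, u x i * pd i (fun y => u y j) x) * v x j by fun_prop)
  have i3 := int (show Continuous fun x =>
    ∑ j, (∑ i, u x i * pd i (fun y => v y j) x) * u x j by fun_prop)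
  have i4 := int (show Continuous fun x =>
    h x * ∑ i, ∑ j, symGrad u x i j * symGrad v x i j by fun_prop)
  have i5 := int (show Continuous fun x => (P x + F x) * divg v x by
    unfold divg
    fun_prop)
  have i6 := int (show Continuous fun x => dot (b x) (v x) by
    unfold dot
    fun_prop)
  have i7 := int (show Continuous fun x => ∑ j, k x j * v x j by fun_prop)
  have huv : ContDiff ℝ 1 fun x => ∑ j, u x j * v x j :=
    ContDiff.sum fun j _ => (hu1 j).mul (hv' j)
  have hAv : ∀ i, ContDiff ℝ 1 fun x => ∑ j, h x * symGrad u x i j * v x j := fun i =>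
    ContDiff.sum fun j _ => (hA i j).mul (hv' j)
  -- The three periodic fields `h Du v`, `(P + F) v` and `(u·v) u` account for all boundary terms.
  have z1 := integral_divg_eq_zero hL hAv fun i x l => by
    have := fun j => hvp j x l
    have := fun j => hSp i j x l
    simp_all [hhp x l]
  have z2 := integral_divg_eq_zero hL (fun i => (hP.add hF).mul (hv' i)) fun i x l => by
    simp only [hPp x l, hFp x l, hvp i x l]
  have z3 := integral_divg_eq_zero hL (fun i => (hu1 i).mul huv) fun i x l => by
    have := fun j => hvp j x l
    have := fun j => hup j x l
    simp_all
  have d1 : ∀ x, ∑ i, pd i (fun x => ∑ j, h x * symGrad u x i j * v x j) x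
      = (∑ j, (∑ i, pd i (fun y => h y * symGrad u y i j) x) * v x j)
        + h x * ∑ i, ∑ j, symGrad u x i j * symGrad v x i j := by
    intro x
    have e1 : ∀ i, pd i (fun x => ∑ j, h x * symGrad u x i j * v x j) x
        = ∑ j, pd i (fun y => h y * symGrad u y i j) x * v x j
          + h x * ∑ j, symGrad u x i j * pd i (fun y => v y j) x := by
      intro i
      rw [pd_sum fun j => (hA i j).mul (hv' j), Finset.mul_sum, ← Finset.sum_add_distrib]
      refine Finset.sum_congr rfl fun j _ => ?_
      rw [pd_mul (hA i j) (hv' j)]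
      ring
    -- `Du` is symmetric, so it only sees the symmetric part of `∇v`.
    have e2 : ∑ i, ∑ j, symGrad u x i j * symGrad v x i j
        = ∑ i, ∑ j, symGrad u x i j * pd i (fun y => v y j) x := by
      have hswap : ∑ i, ∑ j, symGrad u x i j * pd j (fun y => v y i) x
          = ∑ i, ∑ j, symGrad u x i j * pd i (fun y => v y j) x := by
        rw [Finset.sum_comm]
        refine Finset.sum_congr rfl fun i _ => Finset.sum_congr rfl fun j _ => ?_
        simp only [symGrad, add_comm]
      have : ∑ i, ∑ j, symGrad u x i j * symGrad v x i j
          = (∑ i, ∑ j, symGrad u x i j * pd i (fun y => v y j) x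
            + ∑ i, ∑ j, symGrad u x i j * pd j (fun y => v y i) x) / 2 := by
        simp only [← Finset.sum_add_distrib, Finset.sum_div]
        refine Finset.sum_congr rfl fun i _ => Finset.sum_congr rfl fun j _ => ?_
        rw [symGrad.eq_def v]
        ring
      rw [this, hswap]
      ring
    simp only [e1, e2, Finset.sum_add_distrib, ← Finset.mul_sum, Finset.sum_mul]
    rw [Finset.sum_comm]
  have d2 : ∀ x, ∑ i, pd i (fun x => (P x + F x) * v x i) x
      = (∑ j, (pd j P x + pd j F x) * v x j) + (P x + F x) * divg v x := by
    intro x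
    simp only [divg, Finset.mul_sum, ← Finset.sum_add_distrib]
    refine Finset.sum_congr rfl fun i _ => ?_
    rw [pd_mul (hP.add hF) (hv' i), pd_add hP hF]
  have d3 : ∀ x, ∑ i, pd i (fun x => u x i * ∑ j, u x j * v x j) x
      = (∑ j, (∑ i, u x i * pd i (fun y => u y j) x) * v x j)
        + ∑ j, (∑ i, u x i * pd i (fun y => v y j) x) * u x j := by
    intro x
    have e1 : ∀ i, pd i (fun x => u x i * ∑ j, u x j * v x j) x
        = pd i (fun y => u y i) x * (∑ j, u x j * v x j)
          + (∑ j, u x i * pd i (fun y => u y j) x * v x j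
            + ∑ j, u x i * pd i (fun y => v y j) x * u x j) := by
      intro i
      rw [pd_mul (hu1 i) huv, pd_sum fun j => (hu1 j).mul (hv' j),
        ← Finset.sum_add_distrib]
      congr 1
      rw [Finset.mul_sum]
      refine Finset.sum_congr rfl fun j _ => ?_
      rw [pd_mul (hu1 j) (hv' j)]
      ring
    have e0 := hdiv x
    unfold divg at e0
    simp only [e1, Finset.sum_add_distrib, ← Finset.sum_mul, e0, zero_mul, zero_add]
    simp only [Finset.sum_mul]
    congr 1 <;> exact Finset.sum_comm
  have j1 := int (show Continuous fun x =>
    ∑ i, pd i (fun x => ∑ j, h x * symGrad u x i j * v x j) x from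
    continuous_finsetSum _ fun i _ => continuous_pd i (hAv i))
  have j2 := int (show Continuous fun x => ∑ i, pd i (fun x => (P x + F x) * v x i) x from
    continuous_finsetSum _ fun i _ => continuous_pd i ((hP.add hF).mul (hv' i)))
  have j3 := int (show Continuous fun x =>
    ∑ i, pd i (fun x => u x i * ∑ j, u x j * v x j) x from
    continuous_finsetSum _ fun i _ => continuous_pd i ((hu1 i).mul huv))
  have hpt : ∀ x, (∑ j, w x j * v x j)
        + ((1 / 2) * (∑ j, (∑ i, u x i * pd i (fun y => u y j) x) * v x j)
          - (1 / 2) * ∑ j, (∑ i, u x i * pd i (fun y => v y j) x) * u x j)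
      = -(h x * ∑ i, ∑ j, symGrad u x i j * symGrad v x i j)
        + (P x + F x) * divg v x + dot (b x) (v x) - ∑ j, k x j * v x j
        + (∑ i, pd i (fun x => ∑ j, h x * symGrad u x i j * v x j) x
          - ∑ i, pd i (fun x => (P x + F x) * v x i) x
          - (1 / 2) * ∑ i, pd i (fun x => u x i * ∑ j, u x j * v x j) x) := by
    intro x
    have hm : (∑ j, w x j * v x j) + (∑ j, (∑ i, u x i * pd i (fun y => u y j) x) * v x j)
        = (∑ j, (∑ i, pd i (fun y => h y * symGrad u y i j) x) * v x j)
          - (∑ j, (pd j P x + pd j F x) * v x j) - (∑ j, k x j * v x j)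
          + dot (b x) (v x) := by
      simp only [dot, ← Finset.sum_add_distrib, ← Finset.sum_sub_distrib]
      refine Finset.sum_congr rfl fun j _ => ?_
      rw [← add_mul, heq x j]
      ring
    rw [d1, d2, d3]
    linarith
  exact integral_balance i1 i2 i3 i4 i5 i6 i7 j1 j2 j3 hpt z1 z2 z3

/-- weak form of the momentum equation with pressure shifted by the free energy. -/
theorem momentum_weak_form
    {d : ℕ} (hd : d = 1 ∨ d = 2 ∨ d = 3)
    (T : ℝ) (hT : 0 < T) (L : Fin d → ℝ) (hL : ∀ i, 0 < L i)
    (G : (Fin d → ℝ) → ℝ) (hG : ContDiff ℝ 2 G)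
    (f : ℝ → ℝ → ℝ)
    (hf : ContDiffOn ℝ 2 (fun q : ℝ × ℝ => f q.1 q.2) (Set.univ ×ˢ Set.Ioi 0))
    (M K η : ℝ → ℝ → ℝ)
    (hM : ContDiff ℝ (⊤ : ℕ∞) fun q : ℝ × ℝ => M q.1 q.2) (hMpos : ∀ a b, 0 < M a b)
    (hK : ContDiff ℝ (⊤ : ℕ∞) fun q : ℝ × ℝ => K q.1 q.2) (hKpos : ∀ a b, 0 < K a b)
    (hη : ContDiff ℝ (⊤ : ℕ∞) fun q : ℝ × ℝ => η q.1 q.2) (hηpos : ∀ a b, 0 < η a b)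
    (φ θ ptilde : ℝ → (Fin d → ℝ) → ℝ)
    (u : ℝ → (Fin d → ℝ) → Fin d → ℝ)
    (Q : ℝ → (Fin d → ℝ) → ℝ) (b : ℝ → (Fin d → ℝ) → Fin d → ℝ)
    (hφ : ContDiff ℝ (⊤ : ℕ∞) fun q : ℝ × (Fin d → ℝ) => φ q.1 q.2)
    (hθsm : ContDiff ℝ (⊤ : ℕ∞) fun q : ℝ × (Fin d → ℝ) => θ q.1 q.2)
    (hpsm : ContDiff ℝ (⊤ : ℕ∞) fun q : ℝ × (Fin d → ℝ) => ptilde q.1 q.2)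
    (husm : ContDiff ℝ (⊤ : ℕ∞) fun q : ℝ × (Fin d → ℝ) => u q.1 q.2)
    (hQsm : ContDiff ℝ (⊤ : ℕ∞) fun q : ℝ × (Fin d → ℝ) => Q q.1 q.2)
    (hbsm : ContDiff ℝ (⊤ : ℕ∞) fun q : ℝ × (Fin d → ℝ) => b q.1 q.2)
    (hθpos : ∀ t x, 0 < θ t x)
    (hφper : ∀ t, SpacePeriodic L (φ t))
    (hθper : ∀ t, SpacePeriodic L (θ t))
    (hpper : ∀ t, SpacePeriodic L (ptilde t))
    (huper : ∀ t j, SpacePeriodic L fun x => u t x j)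
    (hQper : ∀ t, SpacePeriodic L (Q t))
    (hbper : ∀ t j, SpacePeriodic L fun x => b t x j)
    -- (AC): ∂ₜφ + u·∇φ = -Mμ/θ
    (hAC : ∀ t ∈ Set.Ioo (0 : ℝ) T, ∀ x,
      dt φ t x + dot (u t x) (grad (φ t) x)
        = -(M (φ t x) (θ t x)) * chemMu G f φ θ t x / θ t x)
    -- (IE): ∂ₜe + u·∇e = -div(K∇(1/θ)) + η|Du|² - σ̃:∇u + Q
    (hIE : ∀ t ∈ Set.Ioo (0 : ℝ) T, ∀ x,
      dt (intE f φ θ) t x + dot (u t x) (grad (intE f φ θ t) x)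
        = -divg (fun y i => K (φ t y) (θ t y) * pd i (fun z => (θ t z)⁻¹) y) x
          + η (φ t x) (θ t x) * (∑ i, ∑ j, (symGrad (u t) x i j) ^ 2)
          - (∑ i, ∑ j, korteweg G φ θ t x i j * pd i (fun y => u t y j) x)
          + Q t x)
    -- (NS): ∂ₜu + (u·∇)u = div(ηDu) - ∇p̃ - div(σ̃) + b
    (hNS : ∀ t ∈ Set.Ioo (0 : ℝ) T, ∀ x, ∀ j,
      dt (fun s y => u s y j) t x + ∑ i, u t x i * pd i (fun y => u t y j) x
        = (∑ i, pd i (fun y => η (φ t y) (θ t y) * symGrad (u t) y i j) x)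
          - pd j (ptilde t) x
          - (∑ i, pd i (fun y => korteweg G φ θ t y i j) x)
          + b t x j)
    -- (DF): div(u) = 0
    (hDF : ∀ t ∈ Set.Ioo (0 : ℝ) T, ∀ x, divg (u t) x = 0)
    :
    ∀ v : (Fin d → ℝ) → Fin d → ℝ, ContDiff ℝ (⊤ : ℕ∞) v →
      (∀ j, SpacePeriodic L fun x => v x j) →
      ∀ t ∈ Set.Ioo (0 : ℝ) T,
        (∫ x in box L, ∑ j, dt (fun s y => u s y j) t x * v x j)
            + ((1 / 2) * (∫ x in box L,
                  ∑ j, (∑ i, u t x i * pd i (fun y => u t y j) x) * v x j)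
                - (1 / 2) * ∫ x in box L,
                  ∑ j, (∑ i, u t x i * pd i (fun y => v y j) x) * u t x j)
          = -(∫ x in box L, η (φ t x) (θ t x) *
                ∑ i, ∑ j, symGrad (u t) x i j * symGrad v x i j)
            + (∫ x in box L,
                (ptilde t x + θ t x * G (grad (φ t) x) + f (φ t x) (θ t x)) * divg v x)
            + (∫ x in box L, dot (b t x) (v x))
            - ∫ x in box L, ∑ j,
                (dot (grad G (grad (φ t) x)) (grad (θ t) x) * pd j (φ t) x
                  + entS G f φ θ t x * pd j (θ t) x
                  - chemMu G f φ θ t x * pd j (φ t) x) * v x j := by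
  intro v hv hvper t ht
  have slice : ContDiff ℝ (⊤ : ℕ∞) fun x : Fin d → ℝ => (t, x) :=
    contDiff_const.prodMk contDiff_id
  have hφt : ContDiff ℝ (⊤ : ℕ∞) (φ t) := hφ.comp slice
  have hθt : ContDiff ℝ (⊤ : ℕ∞) (θ t) := hθsm.comp slice
  have hpt : ContDiff ℝ (⊤ : ℕ∞) (ptilde t) := hpsm.comp slice
  have hut : ContDiff ℝ (⊤ : ℕ∞) (u t) := husm.comp slice
  have hbt : ContDiff ℝ (⊤ : ℕ∞) (b t) := hbsm.comp slice
  have hηt : ContDiff ℝ (⊤ : ℕ∞) fun x => η (φ t x) (θ t x) := hη.comp (hφt.prodMk hθt)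
  have le : ∀ n : ℕ, (n : WithTop ℕ∞) ≤ ((⊤ : ℕ∞) : WithTop ℕ∞) := fun n => by
    exact_mod_cast le_top
  have hφ2 : ContDiff ℝ 2 (φ t) := hφt.of_le (le 2)
  have hθ1 : ContDiff ℝ 1 (θ t) := hθt.of_le (le 1)
  have hgφ : ContDiff ℝ 1 (grad (φ t)) := contDiff_grad (n := 1) (by norm_num; exact hφ2)
  have hgG : ContDiff ℝ 1 (grad G) := contDiff_grad (n := 1) (by norm_num; exact hG)
  have hF : ContDiff ℝ 1 fun y => θ t y * G (grad (φ t) y) + f (φ t y) (θ t y) :=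
    (hθ1.mul ((hG.of_le (by norm_num)).comp hgφ)).add
      ((hf.of_le (by norm_num)).comp_contDiff ((hφt.of_le (le 1)).prodMk hθ1)
        fun y => ⟨trivial, hθpos t y⟩)
  have hdk := divg_korteweg hG hf hφ2 hθ1 (hθpos t)
  -- Continuity of the Korteweg force is read off from `div σ̃ - ∇F`, where no derivative of `f`
  -- along one variable appears.
  have hk : Continuous fun x => fun j =>
      dot (grad G (grad (φ t) x)) (grad (θ t) x) * pd j (φ t) x
        + entS G f φ θ t x * pd j (θ t) x - chemMu G f φ θ t x * pd j (φ t) x := by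
    refine continuous_pi fun j => ?_
    have : (fun x => dot (grad G (grad (φ t) x)) (grad (θ t) x) * pd j (φ t) x
          + entS G f φ θ t x * pd j (θ t) x - chemMu G f φ θ t x * pd j (φ t) x)
        = fun x => ∑ i, pd i (fun y => korteweg G φ θ t y i j) x
          - pd j (fun y => θ t y * G (grad (φ t) y) + f (φ t y) (θ t y)) x := by
      funext x
      rw [hdk x j]
      ring
    rw [this]
    refine (continuous_finsetSum _ fun i _ => continuous_pd i ?_).sub (continuous_pd j hF)
    exact (hθ1.mul (contDiff_pi.1 (hgG.comp hgφ) i)).mul (contDiff_pi.1 hgφ j)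
  have hgper : ∀ x l, grad (φ t) (x + Pi.single l (L l)) = grad (φ t) x := fun x l =>
    funext fun i => pd_periodic (hφper t) i x l
  have main := weak_form_of_strong_form hL (w := fun x j => dt (fun s y => u s y j) t x)
    (hηt.of_le (le 1)) (hpt.of_le (le 1)) hF (hut.of_le (le 2)) (hv.of_le (le 1))
    hbt.continuous hk
    (fun x l => by simp only [hφper t x l, hθper t x l]) (hpper t)
    (fun x l => by simp only [hφper t x l, hθper t x l, hgper x l])
    (huper t) hvper (hDF t ht) (fun x j => by rw [hNS t ht x j, hdk x j])
  simpa only [add_assoc] using main
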